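/- Let φ(x) = ST_12(I,x) for some modal intuitionistic formula I, let k = r(φ) be its degree, let Σ_φ ⊆ Θ, let (M₁,t) and (M₂,u) be pointed Θ-models, and let (A,B) be a (1,2)-modal ⟨(M₁,t),(M₂,u)⟩_l-asimulation. Then for all p,q ∈ {1,2}, every (m+1)-tuple (ā_m,a) of elements of M_p and every (m+1)-tuple (b̄_m,b) of elements of M_q: if (ā_m,a) A (b̄_m,b), m + k ≤ l, and M_p,a ⊨ φ(x), then M_q,b ⊨ φ(x). -/

import Mathlib

namespace ModalIntAsim

/-- Binary relation symbols of the correspondence vocabulary: R, R_□, R_◇. -/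
inductive RelSym : Type
  | r | box | diam
deriving DecidableEq

/-- Formulas of the correspondence language: classical first-order logic without
identity, with variables indexed by `ℕ`, unary predicate letters `P n` (n : ℕ),
and the three binary relation symbols. -/
inductive FOForm : Type
  | falsum : FOForm
  | pred : ℕ → ℕ → FOForm            -- `pred n v` is `P_n(x_v)`
  | rel : RelSym → ℕ → ℕ → FOForm    -- `rel s v w` is `S(x_v, x_w)`
  | conj : FOForm → FOForm → FOForm
  | disj : FOForm → FOForm → FOForm
  | impl : FOForm → FOForm → FOForm
  | all : ℕ → FOForm → FOForm
  | ex : ℕ → FOForm → FOForm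

namespace FOForm

/-- Free variables of a correspondence formula. -/
def freeVars : FOForm → Finset ℕ
  | falsum => ∅
  | pred _ v => {v}
  | rel _ v w => {v, w}
  | conj f g => f.freeVars ∪ g.freeVars
  | disj f g => f.freeVars ∪ g.freeVars
  | impl f g => f.freeVars ∪ g.freeVars
  | all v f => f.freeVars \ {v}
  | ex v f => f.freeVars \ {v}

/-- The unary predicate letters occurring in a formula (the binary relation
symbols R, R_□, R_◇ are regarded as belonging to every vocabulary Σ_φ). -/
def predLetters : FOForm → Finset ℕ
  | falsum => ∅
  | pred n _ => {n}
  | rel _ _ _ => ∅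
  | conj f g => f.predLetters ∪ g.predLetters
  | disj f g => f.predLetters ∪ g.predLetters
  | impl f g => f.predLetters ∪ g.predLetters
  | all _ f => f.predLetters
  | ex _ f => f.predLetters

/-- Degree of a formula: the greatest number of nested quantifiers. -/
def degree : FOForm → ℕ
  | falsum => 0
  | pred _ _ => 0
  | rel _ _ _ => 0
  | conj f g => max f.degree g.degree
  | disj f g => max f.degree g.degree
  | impl f g => max f.degree g.degree
  | all _ f => f.degree + 1
  | ex _ f => f.degree + 1

end FOForm

/-- A model of the correspondence language: a domain together with
interpretations of R, R_□, R_◇ and of the unary predicate letters.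
(A Θ-model only consults the letters in Θ.) -/
structure Model : Type 1 where
  U : Type
  rel : U → U → Prop
  relBox : U → U → Prop
  relDiam : U → U → Prop
  pred : ℕ → U → Prop

/-- Interpretation of a binary relation symbol in a model. -/
def Model.relOf (M : Model) : RelSym → M.U → M.U → Prop
  | .r => M.rel
  | .box => M.relBox
  | .diam => M.relDiam

/-- Tarskian satisfaction of a formula in a model under an assignment. -/
def Sat (M : Model) : FOForm → (ℕ → M.U) → Prop
  | .falsum, _ => False
  | .pred n v, α => M.pred n (α v)
  | .rel s v w, α => M.relOf s (α v) (α w)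
  | .conj f g, α => Sat M f α ∧ Sat M g α
  | .disj f g, α => Sat M f α ∨ Sat M g α
  | .impl f g, α => Sat M f α → Sat M g α
  | .all v f, α => ∀ u : M.U, Sat M f (Function.update α v u)
  | .ex v f, α => ∃ u : M.U, Sat M f (Function.update α v u)

/-- `M, a ⊨ φ(x)`: φ is true in `M` under any assignment sending `x` to `a`. -/
def SatAt (M : Model) (a : M.U) (x : ℕ) (φ : FOForm) : Prop :=
  ∀ α : ℕ → M.U, α x = a → Sat M φ α

/-- Logical equivalence of correspondence formulas. -/
def Equiv (φ ψ : FOForm) : Prop :=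
  ∀ (M : Model) (α : ℕ → M.U), Sat M φ α ↔ Sat M ψ α

/-- Logical entailment between correspondence formulas. -/
def Entails (φ ψ : FOForm) : Prop :=
  ∀ (M : Model) (α : ℕ → M.U), Sat M φ α → Sat M ψ α

/-- Modal intuitionistic formulas: built from propositional letters `p n`
using ⊥, ∧, ∨, →, □, ◇. -/
inductive MForm : Type
  | bot : MForm
  | prop : ℕ → MForm
  | conj : MForm → MForm → MForm
  | disj : MForm → MForm → MForm
  | impl : MForm → MForm → MForm
  | box : MForm → MForm
  | diam : MForm → MForm

/-- The (i,j)-standard x-translation `ST_ij`.  `boxOne = true` means the box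
clause (□₁) is used (i = 1), `boxOne = false` means (□₂) (i = 2); likewise
`diamOne = true` means the diamond clause (◇₁) (j = 1) and `diamOne = false`
means (◇₂) (j = 2).  Bound variables are chosen fresh as `x+1`, `x+2`. -/
def ST (boxOne diamOne : Bool) : MForm → ℕ → FOForm
  | .bot, _ => .falsum
  | .prop n, x => .pred n x
  | .conj I J, x => .conj (ST boxOne diamOne I x) (ST boxOne diamOne J x)
  | .disj I J, x => .disj (ST boxOne diamOne I x) (ST boxOne diamOne J x)
  | .impl I J, x =>
      .all (x + 1) (.impl (.rel .r x (x + 1))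
        (.impl (ST boxOne diamOne I (x + 1)) (ST boxOne diamOne J (x + 1))))
  | .box I, x =>
      if boxOne then
        .all (x + 1) (.impl (.rel .box x (x + 1)) (ST boxOne diamOne I (x + 1)))
      else
        .all (x + 1) (.impl (.rel .r x (x + 1))
          (.all (x + 2) (.impl (.rel .box (x + 1) (x + 2)) (ST boxOne diamOne I (x + 2)))))
  | .diam I, x =>
      if diamOne then
        .ex (x + 1) (.conj (.rel .diam x (x + 1)) (ST boxOne diamOne I (x + 1)))
      else
        .all (x + 1) (.impl (.rel .r x (x + 1))
          (.ex (x + 2) (.conj (.rel .diam (x + 1) (x + 2)) (ST boxOne diamOne I (x + 2)))))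

/-! ### Conditions on relations between tuples (the k-asimulation conditions).
A relation between the two models is represented by its two directed
components; `N` is the model of the source tuple and `P` that of the target
tuple.  A tuple `(ā_m, a)` is represented as the list `as ++ [a]`, with
`m = as.length`. -/

section TupleConds

variable (N P : Model)

/-- The "p-type" condition: related tuples are nonempty and of equal length. -/
def TypeCond (A : List N.U → List P.U → Prop) : Prop :=
  ∀ as bs, A as bs → as ≠ [] ∧ as.length = bs.length

/-- (p-base). -/
def BaseCond (Θ : Set ℕ) (A : List N.U → List P.U → Prop) : Prop :=
  ∀ (as : List N.U) (bs : List P.U) (a : N.U) (b : P.U),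
    A (as ++ [a]) (bs ++ [b]) → ∀ n ∈ Θ, N.pred n a → P.pred n b

/-- (p-step). -/
def StepCond (k : ℕ) (A : List N.U → List P.U → Prop)
    (Arev : List P.U → List N.U → Prop) : Prop :=
  ∀ (as : List N.U) (bs : List P.U) (a : N.U) (b d : P.U),
    A (as ++ [a]) (bs ++ [b]) → P.rel b d → as.length < k →
    ∃ c : N.U, N.rel a c ∧ A (as ++ [a, c]) (bs ++ [b, d]) ∧
      Arev (bs ++ [b, d]) (as ++ [a, c])

/-- (p-box-1). -/
def Box1Cond (k : ℕ) (A : List N.U → List P.U → Prop) : Prop :=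
  ∀ (as : List N.U) (bs : List P.U) (a : N.U) (b d : P.U),
    A (as ++ [a]) (bs ++ [b]) → P.relBox b d → as.length < k →
    ∃ c : N.U, N.relBox a c ∧ A (as ++ [a, c]) (bs ++ [b, d])

/-- (p-box-2). -/
def Box2Cond (k : ℕ) (A : List N.U → List P.U → Prop) : Prop :=
  ∀ (as : List N.U) (bs : List P.U) (a : N.U) (b d f : P.U),
    A (as ++ [a]) (bs ++ [b]) → P.rel b d → P.relBox d f → as.length + 1 < k →
    ∃ c e : N.U, N.rel a c ∧ N.relBox c e ∧ A (as ++ [a, c, e]) (bs ++ [b, d, f])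

/-- (p-diam-1). -/
def Diam1Cond (k : ℕ) (A : List N.U → List P.U → Prop) : Prop :=
  ∀ (as : List N.U) (bs : List P.U) (a c : N.U) (b : P.U),
    A (as ++ [a]) (bs ++ [b]) → N.relDiam a c → as.length < k →
    ∃ d : P.U, P.relDiam b d ∧ A (as ++ [a, c]) (bs ++ [b, d])

/-- (p-diam-2(1)). -/
def Diam2aCond (k : ℕ) (A B : List N.U → List P.U → Prop) : Prop :=
  ∀ (as : List N.U) (bs : List P.U) (a : N.U) (b d : P.U),
    A (as ++ [a]) (bs ++ [b]) → P.rel b d → as.length + 1 < k →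
    ∃ c : N.U, N.rel a c ∧ B (as ++ [a, c]) (bs ++ [b, d])

/-- (p-diam-2(2)). -/
def Diam2bCond (k : ℕ) (B A : List N.U → List P.U → Prop) : Prop :=
  ∀ (as : List N.U) (bs : List P.U) (a c : N.U) (b : P.U),
    B (as ++ [a]) (bs ++ [b]) → N.relDiam a c → as.length < k →
    ∃ d : P.U, P.relDiam b d ∧ A (as ++ [a, c]) (bs ++ [b, d])

end TupleConds

/-- An (i,1)-modal ⟨(M₁,t),(M₂,u)⟩_k-asimulation (j = 1): a single relation `A`
given by its two directed components `A12`, `A21`. -/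
def IsKAsimD1 (boxOne : Bool) (Θ : Set ℕ) (M₁ M₂ : Model) (t : M₁.U) (u : M₂.U) (k : ℕ)
    (A12 : List M₁.U → List M₂.U → Prop) (A21 : List M₂.U → List M₁.U → Prop) : Prop :=
  TypeCond M₁ M₂ A12 ∧ TypeCond M₂ M₁ A21 ∧
  A12 [t] [u] ∧
  BaseCond M₁ M₂ Θ A12 ∧ BaseCond M₂ M₁ Θ A21 ∧
  StepCond M₁ M₂ k A12 A21 ∧ StepCond M₂ M₁ k A21 A12 ∧
  (if boxOne then Box1Cond M₁ M₂ k A12 ∧ Box1Cond M₂ M₁ k A21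
   else Box2Cond M₁ M₂ k A12 ∧ Box2Cond M₂ M₁ k A21) ∧
  Diam1Cond M₁ M₂ k A12 ∧ Diam1Cond M₂ M₁ k A21

/-- An (i,2)-modal ⟨(M₁,t),(M₂,u)⟩_k-asimulation (j = 2): an ordered pair
(A, B) of relations, each given by its two directed components. -/
def IsKAsimD2 (boxOne : Bool) (Θ : Set ℕ) (M₁ M₂ : Model) (t : M₁.U) (u : M₂.U) (k : ℕ)
    (A12 : List M₁.U → List M₂.U → Prop) (A21 : List M₂.U → List M₁.U → Prop)
    (B12 : List M₁.U → List M₂.U → Prop) (B21 : List M₂.U → List M₁.U → Prop) : Prop :=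
  TypeCond M₁ M₂ A12 ∧ TypeCond M₂ M₁ A21 ∧
  TypeCond M₁ M₂ B12 ∧ TypeCond M₂ M₁ B21 ∧
  A12 [t] [u] ∧
  BaseCond M₁ M₂ Θ A12 ∧ BaseCond M₂ M₁ Θ A21 ∧
  StepCond M₁ M₂ k A12 A21 ∧ StepCond M₂ M₁ k A21 A12 ∧
  (if boxOne then Box1Cond M₁ M₂ k A12 ∧ Box1Cond M₂ M₁ k A21
   else Box2Cond M₁ M₂ k A12 ∧ Box2Cond M₂ M₁ k A21) ∧
  Diam2aCond M₁ M₂ k A12 B12 ∧ Diam2aCond M₂ M₁ k A21 B21 ∧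
  Diam2bCond M₁ M₂ k B12 A12 ∧ Diam2bCond M₂ M₁ k B21 A21

/-- φ(x) is invariant with respect to (i,1)-modal k-asimulations. -/
def KInvariantD1 (boxOne : Bool) (x : ℕ) (φ : FOForm) (k : ℕ) : Prop :=
  ∀ Θ : Set ℕ, (φ.predLetters : Set ℕ) ⊆ Θ →
  ∀ (M₁ M₂ : Model) (t : M₁.U) (u : M₂.U)
    (A12 : List M₁.U → List M₂.U → Prop) (A21 : List M₂.U → List M₁.U → Prop),
    IsKAsimD1 boxOne Θ M₁ M₂ t u k A12 A21 →
    ∀ (a : M₁.U) (b : M₂.U), A12 [a] [b] → SatAt M₁ a x φ → SatAt M₂ b x φ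

/-- φ(x) is invariant with respect to (i,2)-modal k-asimulations. -/
def KInvariantD2 (boxOne : Bool) (x : ℕ) (φ : FOForm) (k : ℕ) : Prop :=
  ∀ Θ : Set ℕ, (φ.predLetters : Set ℕ) ⊆ Θ →
  ∀ (M₁ M₂ : Model) (t : M₁.U) (u : M₂.U)
    (A12 : List M₁.U → List M₂.U → Prop) (A21 : List M₂.U → List M₁.U → Prop)
    (B12 : List M₁.U → List M₂.U → Prop) (B21 : List M₂.U → List M₁.U → Prop),
    IsKAsimD2 boxOne Θ M₁ M₂ t u k A12 A21 B12 B21 →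
    ∀ (a : M₁.U) (b : M₂.U), A12 [a] [b] → SatAt M₁ a x φ → SatAt M₂ b x φ

/-! ### Conditions for asimulations *simpliciter* (relations between elements). -/

section ElemConds

variable (N P : Model)

/-- (base). -/
def BaseCondE (Θ : Set ℕ) (A : N.U → P.U → Prop) : Prop :=
  ∀ (a : N.U) (b : P.U), A a b → ∀ n ∈ Θ, N.pred n a → P.pred n b

/-- (step). -/
def StepCondE (A : N.U → P.U → Prop) (Arev : P.U → N.U → Prop) : Prop :=
  ∀ (a : N.U) (b d : P.U), A a b → P.rel b d →
    ∃ c : N.U, N.rel a c ∧ A c d ∧ Arev d c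

/-- (box-1). -/
def Box1CondE (A : N.U → P.U → Prop) : Prop :=
  ∀ (a : N.U) (b d : P.U), A a b → P.relBox b d →
    ∃ c : N.U, N.relBox a c ∧ A c d

/-- (box-2). -/
def Box2CondE (A : N.U → P.U → Prop) : Prop :=
  ∀ (a : N.U) (b d f : P.U), A a b → P.rel b d → P.relBox d f →
    ∃ c e : N.U, N.rel a c ∧ N.relBox c e ∧ A e f

/-- (diam-1). -/
def Diam1CondE (A : N.U → P.U → Prop) : Prop :=
  ∀ (a c : N.U) (b : P.U), A a b → N.relDiam a c →
    ∃ d : P.U, P.relDiam b d ∧ A c d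

/-- (diam-2(1)). -/
def Diam2aCondE (A B : N.U → P.U → Prop) : Prop :=
  ∀ (a : N.U) (b d : P.U), A a b → P.rel b d →
    ∃ c : N.U, N.rel a c ∧ B c d

/-- (diam-2(2)). -/
def Diam2bCondE (B A : N.U → P.U → Prop) : Prop :=
  ∀ (a c : N.U) (b : P.U), B a b → N.relDiam a c →
    ∃ d : P.U, P.relDiam b d ∧ A c d

end ElemConds

/-- An (i,1)-modal ⟨(M₁,t),(M₂,u)⟩-asimulation (j = 1). -/
def IsAsimD1 (boxOne : Bool) (Θ : Set ℕ) (M₁ M₂ : Model) (t : M₁.U) (u : M₂.U)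
    (A12 : M₁.U → M₂.U → Prop) (A21 : M₂.U → M₁.U → Prop) : Prop :=
  A12 t u ∧
  BaseCondE M₁ M₂ Θ A12 ∧ BaseCondE M₂ M₁ Θ A21 ∧
  StepCondE M₁ M₂ A12 A21 ∧ StepCondE M₂ M₁ A21 A12 ∧
  (if boxOne then Box1CondE M₁ M₂ A12 ∧ Box1CondE M₂ M₁ A21
   else Box2CondE M₁ M₂ A12 ∧ Box2CondE M₂ M₁ A21) ∧
  Diam1CondE M₁ M₂ A12 ∧ Diam1CondE M₂ M₁ A21

/-- An (i,2)-modal ⟨(M₁,t),(M₂,u)⟩-asimulation (j = 2). -/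
def IsAsimD2 (boxOne : Bool) (Θ : Set ℕ) (M₁ M₂ : Model) (t : M₁.U) (u : M₂.U)
    (A12 : M₁.U → M₂.U → Prop) (A21 : M₂.U → M₁.U → Prop)
    (B12 : M₁.U → M₂.U → Prop) (B21 : M₂.U → M₁.U → Prop) : Prop :=
  A12 t u ∧
  BaseCondE M₁ M₂ Θ A12 ∧ BaseCondE M₂ M₁ Θ A21 ∧
  StepCondE M₁ M₂ A12 A21 ∧ StepCondE M₂ M₁ A21 A12 ∧
  (if boxOne then Box1CondE M₁ M₂ A12 ∧ Box1CondE M₂ M₁ A21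
   else Box2CondE M₁ M₂ A12 ∧ Box2CondE M₂ M₁ A21) ∧
  Diam2aCondE M₁ M₂ A12 B12 ∧ Diam2aCondE M₂ M₁ A21 B21 ∧
  Diam2bCondE M₁ M₂ B12 A12 ∧ Diam2bCondE M₂ M₁ B21 A21

/-- φ(x) is invariant with respect to (i,1)-modal asimulations. -/
def InvariantD1 (boxOne : Bool) (x : ℕ) (φ : FOForm) : Prop :=
  ∀ Θ : Set ℕ, (φ.predLetters : Set ℕ) ⊆ Θ →
  ∀ (M₁ M₂ : Model) (t : M₁.U) (u : M₂.U)
    (A12 : M₁.U → M₂.U → Prop) (A21 : M₂.U → M₁.U → Prop),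
    IsAsimD1 boxOne Θ M₁ M₂ t u A12 A21 →
    ∀ (a : M₁.U) (b : M₂.U), A12 a b → SatAt M₁ a x φ → SatAt M₂ b x φ

/-- φ(x) is invariant with respect to (i,2)-modal asimulations. -/
def InvariantD2 (boxOne : Bool) (x : ℕ) (φ : FOForm) : Prop :=
  ∀ Θ : Set ℕ, (φ.predLetters : Set ℕ) ⊆ Θ →
  ∀ (M₁ M₂ : Model) (t : M₁.U) (u : M₂.U)
    (A12 : M₁.U → M₂.U → Prop) (A21 : M₂.U → M₁.U → Prop)
    (B12 : M₁.U → M₂.U → Prop) (B21 : M₂.U → M₁.U → Prop),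
    IsAsimD2 boxOne Θ M₁ M₂ t u A12 A21 B12 B21 →
    ∀ (a : M₁.U) (b : M₂.U), A12 a b → SatAt M₁ a x φ → SatAt M₂ b x φ

/-! ### Types, complete conjunctions, ω-saturation. -/

/-- `int(φ,x,l)`: the set of (2,2)-standard x-translations of modal
intuitionistic formulas which are (Σ_φ,x,l)-formulas. -/
def intSet (φ : FOForm) (x l : ℕ) : Set FOForm :=
  {ψ | (∃ I : MForm, ψ = ST false false I x) ∧
    ψ.predLetters ⊆ φ.predLetters ∧ ψ.freeVars ⊆ {x} ∧ ψ.degree ≤ l}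

/-- `tp_l(φ(x),M,a)`. -/
def tpSet (φ : FOForm) (x l : ℕ) (M : Model) (a : M.U) : Set FOForm :=
  {ψ | ψ ∈ intSet φ x l ∧ SatAt M a x ψ}

/-- Conjunction of a nonempty list of formulas. -/
def listConj : FOForm → List FOForm → FOForm
  | ψ, [] => ψ
  | ψ, χ :: L => FOForm.conj ψ (listConj χ L)

/-- Ψ(x) is a complete (φ,x,k)-conjunction. -/
def IsCompleteConj (φ : FOForm) (x k : ℕ) (Ψ : FOForm) : Prop :=
  (∃ (ψ₀ : FOForm) (L : List FOForm), ψ₀ ∈ intSet φ x k ∧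
    (∀ χ ∈ L, χ ∈ intSet φ x k) ∧ Ψ = listConj ψ₀ L) ∧
  ∃ (M : Model) (a : M.U), SatAt M a x (FOForm.conj Ψ φ) ∧
    ∀ ψ ∈ tpSet φ x k M a, Entails Ψ ψ

/-- `int_x(Θ)` for the (i,j)-standard translation. -/
def intX (Θ : Set ℕ) (boxOne diamOne : Bool) (x : ℕ) : Set FOForm :=
  {ψ | (∃ I : MForm, ψ = ST boxOne diamOne I x) ∧ (ψ.predLetters : Set ℕ) ⊆ Θ}

/-- `tp_x(M,t)` for the (i,j)-standard translation. -/
def tpX (Θ : Set ℕ) (boxOne diamOne : Bool) (x : ℕ) (M : Model) (t : M.U) : Set FOForm :=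
  {ψ | ψ ∈ intX Θ boxOne diamOne x ∧ SatAt M t x ψ}

/-- `imp_x(M,t) = ⋂ { t̄p_x(M,u) : t R_◇ u }` (for the (2,2)-translation). -/
def impX (Θ : Set ℕ) (x : ℕ) (M : Model) (t : M.U) : Set FOForm :=
  {ψ | ψ ∈ intX Θ false false x ∧ ∀ u : M.U, M.relDiam t u → ¬ SatAt M u x ψ}

/-- ω-saturation: for every finite tuple of parameters (the first `n` values of
an assignment `α`) and every set `Γ` of formulas with finitely many free
variables beyond the parameters, if `Γ` is consistent with the first-order
theory of `[M,ā]` (i.e. satisfiable together with it in some model), then `Γ`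
is realized in `[M,ā]`. -/
def OmegaSaturated (M : Model) : Prop :=
  ∀ (n : ℕ) (α : ℕ → M.U) (Γ : Set FOForm),
    (∃ k : ℕ, ∀ γ ∈ Γ, γ.freeVars ⊆ Finset.range (n + k)) →
    (∃ (N : Model) (β : ℕ → N.U),
      (∀ ψ : FOForm, ψ.freeVars ⊆ Finset.range n → Sat M ψ α → Sat N ψ β) ∧
      ∀ γ ∈ Γ, Sat N γ β) →
    ∃ α' : ℕ → M.U, (∀ i < n, α' i = α i) ∧ ∀ γ ∈ Γ, Sat M γ α'

/-! ### Relativization to a class κ of models. -/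

/-- κ(Θ) is first-order axiomatizable for every finite Θ (with R ∈ Θ): for
every finite set `S` of unary predicate letters there is a set of Θ-sentences
axiomatizing membership in κ. -/
def FinAxiomatizable (κ : Set Model) : Prop :=
  ∀ S : Finset ℕ, ∃ Ax : Set FOForm,
    (∀ ψ ∈ Ax, ψ.freeVars = ∅ ∧ (ψ.predLetters : Set ℕ) ⊆ (S : Set ℕ)) ∧
    ∀ M : Model, M ∈ κ ↔ ∀ ψ ∈ Ax, ∀ α : ℕ → M.U, Sat M ψ α

/-- φ κ-follows from ψ: {ψ, ¬φ} is not κ-satisfiable. -/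
def KappaFollows (κ : Set Model) (ψ φ : FOForm) : Prop :=
  ¬ ∃ M : Model, M ∈ κ ∧ ∃ α : ℕ → M.U, Sat M ψ α ∧ ¬ Sat M φ α

/-- κ-equivalence of formulas. -/
def KappaEquiv (κ : Set Model) (φ ψ : FOForm) : Prop :=
  KappaFollows κ φ ψ ∧ KappaFollows κ ψ φ

/-- φ(x) is κ-invariant with respect to (i,1)-modal asimulations. -/
def KappaInvariantD1 (κ : Set Model) (boxOne : Bool) (x : ℕ) (φ : FOForm) : Prop :=
  ∀ Θ : Set ℕ, (φ.predLetters : Set ℕ) ⊆ Θ →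
  ∀ (M₁ M₂ : Model), M₁ ∈ κ → M₂ ∈ κ →
  ∀ (t : M₁.U) (u : M₂.U)
    (A12 : M₁.U → M₂.U → Prop) (A21 : M₂.U → M₁.U → Prop),
    IsAsimD1 boxOne Θ M₁ M₂ t u A12 A21 →
    ∀ (a : M₁.U) (b : M₂.U), A12 a b → SatAt M₁ a x φ → SatAt M₂ b x φ

/-- φ(x) is κ-invariant with respect to (i,2)-modal asimulations. -/
def KappaInvariantD2 (κ : Set Model) (boxOne : Bool) (x : ℕ) (φ : FOForm) : Prop :=
  ∀ Θ : Set ℕ, (φ.predLetters : Set ℕ) ⊆ Θ →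
  ∀ (M₁ M₂ : Model), M₁ ∈ κ → M₂ ∈ κ →
  ∀ (t : M₁.U) (u : M₂.U)
    (A12 : M₁.U → M₂.U → Prop) (A21 : M₂.U → M₁.U → Prop)
    (B12 : M₁.U → M₂.U → Prop) (B21 : M₂.U → M₁.U → Prop),
    IsAsimD2 boxOne Θ M₁ M₂ t u A12 A21 B12 B21 →
    ∀ (a : M₁.U) (b : M₂.U), A12 a b → SatAt M₁ a x φ → SatAt M₂ b x φ

/-- φ(x) is κ-invariant with respect to (i,j)-modal asimulations
(`diamOne = true` means j = 1). -/
def KappaInvariant (κ : Set Model) (boxOne diamOne : Bool) (x : ℕ) (φ : FOForm) : Prop :=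
  if diamOne then KappaInvariantD1 κ boxOne x φ else KappaInvariantD2 κ boxOne x φ


/-!
Forcing of `I` at the last entries of two related tuples is preserved by induction on `I`. Each
clause of the asimulation matches the clause of one connective: a step along R, R_□ or R_◇ extends
both tuples by one entry and uses up one quantifier of `ST_ij(I, x)`, so that `m + r(φ) ≤ l` is
maintained. Implication reverses the direction of transfer for its antecedent, so the two
directions have to be treated together.
-/

/-- Kripke semantics of modal intuitionistic formulas matching the translation `ST_ij`: the
clauses for □ and ◇ are those of (□₁) or (□₂) and of (◇₁) or (◇₂). -/
def Forces (boxOne diamOne : Bool) (M : Model) : MForm → M.U → Prop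
  | .bot, _ => False
  | .prop n, a => M.pred n a
  | .conj I J, a => Forces boxOne diamOne M I a ∧ Forces boxOne diamOne M J a
  | .disj I J, a => Forces boxOne diamOne M I a ∨ Forces boxOne diamOne M J a
  | .impl I J, a =>
      ∀ b, M.rel a b → Forces boxOne diamOne M I b → Forces boxOne diamOne M J b
  | .box I, a =>
      if boxOne then ∀ b, M.relBox a b → Forces boxOne diamOne M I b
      else ∀ b, M.rel a b → ∀ c, M.relBox b c → Forces boxOne diamOne M I c
  | .diam I, a =>
      if diamOne then ∃ b, M.relDiam a b ∧ Forces boxOne diamOne M I b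
      else ∀ b, M.rel a b → ∃ c, M.relDiam b c ∧ Forces boxOne diamOne M I c

theorem sat_ST_iff_forces (boxOne diamOne : Bool) (M : Model) (I : MForm) (x : ℕ)
    (α : ℕ → M.U) :
    Sat M (ST boxOne diamOne I x) α ↔ Forces boxOne diamOne M I (α x) := by
  induction I generalizing x α with
  | bot => rfl
  | prop n => rfl
  | conj I J ihI ihJ => exact and_congr (ihI x α) (ihJ x α)
  | disj I J ihI ihJ => exact or_congr (ihI x α) (ihJ x α)
  | impl I J ihI ihJ => simp [ST, Sat, Forces, ihI, ihJ, Model.relOf]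
  | box I ih => cases boxOne <;> simp [ST, Sat, Forces, ih, Model.relOf]
  | diam I ih => cases diamOne <;> simp [ST, Sat, Forces, ih, Model.relOf]

theorem satAt_ST_iff_forces (boxOne diamOne : Bool) (M : Model) (I : MForm) (x : ℕ)
    (a : M.U) :
    SatAt M a x (ST boxOne diamOne I x) ↔ Forces boxOne diamOne M I a := by
  simp only [SatAt, sat_ST_iff_forces]
  exact ⟨fun h => h (fun _ => a) rfl, fun h α hα => hα ▸ h⟩

/-- The propositional letters occurring in a modal intuitionistic formula. -/
def MForm.letters : MForm → Finset ℕ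
  | .bot => ∅
  | .prop n => {n}
  | .conj I J => I.letters ∪ J.letters
  | .disj I J => I.letters ∪ J.letters
  | .impl I J => I.letters ∪ J.letters
  | .box I => I.letters
  | .diam I => I.letters

theorem predLetters_ST (boxOne diamOne : Bool) (I : MForm) (x : ℕ) :
    (ST boxOne diamOne I x).predLetters = I.letters := by
  induction I generalizing x with
  | bot => rfl
  | prop n => rfl
  | conj I J ihI ihJ => simp [ST, FOForm.predLetters, MForm.letters, ihI, ihJ]
  | disj I J ihI ihJ => simp [ST, FOForm.predLetters, MForm.letters, ihI, ihJ]
  | impl I J ihI ihJ => simp [ST, FOForm.predLetters, MForm.letters, ihI, ihJ]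
  | box I ih => cases boxOne <;> simp [ST, FOForm.predLetters, MForm.letters, ih]
  | diam I ih => cases diamOne <;> simp [ST, FOForm.predLetters, MForm.letters, ih]

/-- The number of nested accessibility steps made by `Forces`, so that a modality counts twice
under (□₂) or (◇₂). It is the degree of the translation `ST_ij`. -/
def MForm.depth (boxOne diamOne : Bool) : MForm → ℕ
  | .bot => 0
  | .prop _ => 0
  | .conj I J => max (I.depth boxOne diamOne) (J.depth boxOne diamOne)
  | .disj I J => max (I.depth boxOne diamOne) (J.depth boxOne diamOne)
  | .impl I J => max (I.depth boxOne diamOne) (J.depth boxOne diamOne) + 1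
  | .box I => I.depth boxOne diamOne + if boxOne then 1 else 2
  | .diam I => I.depth boxOne diamOne + if diamOne then 1 else 2

theorem degree_ST (boxOne diamOne : Bool) (I : MForm) (x : ℕ) :
    (ST boxOne diamOne I x).degree = I.depth boxOne diamOne := by
  induction I generalizing x with
  | bot => rfl
  | prop n => rfl
  | conj I J ihI ihJ => simp [ST, FOForm.degree, MForm.depth, ihI, ihJ]
  | disj I J ihI ihJ => simp [ST, FOForm.degree, MForm.depth, ihI, ihJ]
  | impl I J ihI ihJ => simp [ST, FOForm.degree, MForm.depth, ihI, ihJ]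
  | box I ih => cases boxOne <;> simp [ST, FOForm.degree, MForm.depth, ih]
  | diam I ih => cases diamOne <;> simp [ST, FOForm.degree, MForm.depth, ih]

/-- `Preserves l n A X Y`: whenever `A` relates two tuples of equal length `m + 1` with
`m + n ≤ l`, property `X` of the last entry of the first tuple implies property `Y` of the last
entry of the second. Here `n` bounds how many further entries the tuples may have to acquire. -/
def Preserves {α β : Type*} (l n : ℕ) (A : List α → List β → Prop) (X : α → Prop)
    (Y : β → Prop) : Prop :=
  ∀ ⦃as : List α⦄ ⦃bs : List β⦄ ⦃a : α⦄ ⦃b : β⦄, as.length = bs.length →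
    A (as ++ [a]) (bs ++ [b]) → as.length + n ≤ l → X a → Y b

namespace Preserves

section Relations

variable {α β : Type*} {l m n : ℕ} {A : List α → List β → Prop} {X X' : α → Prop}
  {Y Y' : β → Prop}

theorem mono (h : Preserves l m A X Y) (hmn : m ≤ n) : Preserves l n A X Y :=
  fun _ _ _ _ hlen hA hn => h hlen hA (by omega)

theorem and (h : Preserves l n A X Y) (h' : Preserves l n A X' Y') :
    Preserves l n A (fun a => X a ∧ X' a) (fun b => Y b ∧ Y' b) :=
  fun _ _ _ _ hlen hA hn => And.imp (h hlen hA hn) (h' hlen hA hn)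

theorem or (h : Preserves l n A X Y) (h' : Preserves l n A X' Y') :
    Preserves l n A (fun a => X a ∨ X' a) (fun b => Y b ∨ Y' b) :=
  fun _ _ _ _ hlen hA hn => Or.imp (h hlen hA hn) (h' hlen hA hn)

theorem of_append_pair (h : Preserves l n A X Y) {as : List α} {bs : List β} {a c : α} {b d : β}
    (hlen : as.length = bs.length) (hA : A (as ++ [a, c]) (bs ++ [b, d]))
    (hn : as.length + (n + 1) ≤ l) (hc : X c) : Y d :=
  h (as := as ++ [a]) (bs := bs ++ [b]) (by simpa using hlen) (by simpa using hA)
    (by simp only [List.length_append, List.length_singleton]; omega) hc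

end Relations

section Models

variable {N P : Model} {l n : ℕ} {A B : List N.U → List P.U → Prop}
  {A' : List P.U → List N.U → Prop} {X Z : N.U → Prop} {Y W : P.U → Prop}

/- Antecedents travel from `P` back to `N`, which is why (p-step) asks for both directions. -/
theorem forall_rel_imp (hstep : StepCond N P l A A') (hant : Preserves l n A' Y X)
    (hcons : Preserves l n A Z W) :
    Preserves l (n + 1) A (fun a => ∀ c, N.rel a c → X c → Z c)
      (fun b => ∀ d, P.rel b d → Y d → W d) := by
  intro as bs a b hlen hA hn hXZ d hbd hYd
  obtain ⟨c, hac, hcd, hdc⟩ := hstep as bs a b d hA hbd (by omega)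
  have hXc : X c := hant.of_append_pair hlen.symm hdc (hlen ▸ hn) hYd
  exact hcons.of_append_pair hlen hcd hn (hXZ c hac hXc)

theorem forall_relBox (hbox : Box1Cond N P l A) (h : Preserves l n A X Y) :
    Preserves l (n + 1) A (fun a => ∀ c, N.relBox a c → X c)
      (fun b => ∀ d, P.relBox b d → Y d) := by
  intro as bs a b hlen hA hn hX d hbd
  obtain ⟨c, hac, hcd⟩ := hbox as bs a b d hA hbd (by omega)
  exact h.of_append_pair hlen hcd hn (hX c hac)

theorem forall_rel_forall_relBox (hbox : Box2Cond N P l A) (h : Preserves l n A X Y) :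
    Preserves l (n + 2) A (fun a => ∀ c, N.rel a c → ∀ e, N.relBox c e → X e)
      (fun b => ∀ d, P.rel b d → ∀ f, P.relBox d f → Y f) := by
  intro as bs a b hlen hA hn hX d hbd f hdf
  obtain ⟨c, e, hac, hce, hef⟩ := hbox as bs a b d f hA hbd hdf (by omega)
  exact h.of_append_pair (as := as ++ [a]) (bs := bs ++ [b]) (by simpa using hlen)
    (by simpa using hef) (by simp only [List.length_append, List.length_singleton]; omega)
    (hX c hac e hce)

/- (p-diam-1) for `A` is (p-diam-2(2)) from `A` to itself, so this covers both ◇-clauses. -/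
theorem exists_relDiam (hdiam : Diam2bCond N P l B A) (h : Preserves l n A X Y) :
    Preserves l (n + 1) B (fun a => ∃ c, N.relDiam a c ∧ X c)
      (fun b => ∃ d, P.relDiam b d ∧ Y d) := by
  rintro as bs a b hlen hB hn ⟨c, hac, hXc⟩
  obtain ⟨d, hbd, hcd⟩ := hdiam as bs a c b hB hac (by omega)
  exact ⟨d, hbd, h.of_append_pair hlen hcd hn hXc⟩

theorem forall_rel (hdiam : Diam2aCond N P l A B) (h : Preserves l (n + 1) B X Y) :
    Preserves l (n + 2) A (fun a => ∀ c, N.rel a c → X c) (fun b => ∀ d, P.rel b d → Y d) := by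
  intro as bs a b hlen hA hn hX d hbd
  obtain ⟨c, hac, hcd⟩ := hdiam as bs a b d hA hbd (by omega)
  exact h.of_append_pair hlen hcd hn (hX c hac)

end Models

end Preserves

/-- The clauses of an (i,j)-modal `l`-asimulation that transfer truth from `N` to `P`: `A` and `B`
are the components of its relations from `N` to `P` (for j = 1, `B` is a dummy), and `A'` is the
component of the first relation from `P` to `N`. -/
structure IsDirectedKAsim (boxOne diamOne : Bool) (Θ : Set ℕ) (N P : Model) (l : ℕ)
    (A : List N.U → List P.U → Prop) (A' : List P.U → List N.U → Prop)
    (B : List N.U → List P.U → Prop) : Prop where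
  base : BaseCond N P Θ A
  step : StepCond N P l A A'
  box : if boxOne then Box1Cond N P l A else Box2Cond N P l A
  diam : if diamOne then Diam1Cond N P l A else Diam2aCond N P l A B ∧ Diam2bCond N P l B A

theorem IsKAsimD2.isDirectedKAsim {boxOne : Bool} {Θ : Set ℕ} {M₁ M₂ : Model} {t : M₁.U}
    {u : M₂.U} {l : ℕ} {A12 B12 : List M₁.U → List M₂.U → Prop}
    {A21 B21 : List M₂.U → List M₁.U → Prop}
    (h : IsKAsimD2 boxOne Θ M₁ M₂ t u l A12 A21 B12 B21) :
    IsDirectedKAsim boxOne false Θ M₁ M₂ l A12 A21 B12 ∧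
      IsDirectedKAsim boxOne false Θ M₂ M₁ l A21 A12 B21 := by
  obtain ⟨-, -, -, -, -, base12, base21, step12, step21, box, diamA12, diamA21, diamB12,
    diamB21⟩ := h
  have box_each : (if boxOne then Box1Cond M₁ M₂ l A12 else Box2Cond M₁ M₂ l A12) ∧
      (if boxOne then Box1Cond M₂ M₁ l A21 else Box2Cond M₂ M₁ l A21) := by
    cases boxOne <;> exact box
  exact ⟨⟨base12, step12, box_each.1, diamA12, diamB12⟩,
    ⟨base21, step21, box_each.2, diamA21, diamB21⟩⟩

namespace IsDirectedKAsim

variable {boxOne diamOne : Bool} {Θ : Set ℕ} {N P : Model} {l : ℕ}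
  {A B : List N.U → List P.U → Prop} {A' B' : List P.U → List N.U → Prop}

theorem preserves_box (h : IsDirectedKAsim boxOne diamOne Θ N P l A A' B) {I : MForm}
    (hI : Preserves l (I.depth boxOne diamOne) A (Forces boxOne diamOne N I)
      (Forces boxOne diamOne P I)) :
    Preserves l (I.box.depth boxOne diamOne) A (Forces boxOne diamOne N I.box)
      (Forces boxOne diamOne P I.box) := by
  cases boxOne
  · exact hI.forall_rel_forall_relBox h.box
  · exact hI.forall_relBox h.box

theorem preserves_diam (h : IsDirectedKAsim boxOne diamOne Θ N P l A A' B) {I : MForm}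
    (hI : Preserves l (I.depth boxOne diamOne) A (Forces boxOne diamOne N I)
      (Forces boxOne diamOne P I)) :
    Preserves l (I.diam.depth boxOne diamOne) A (Forces boxOne diamOne N I.diam)
      (Forces boxOne diamOne P I.diam) := by
  cases diamOne
  · obtain ⟨hAB, hBA⟩ := h.diam
    exact (hI.exists_relDiam hBA).forall_rel hAB
  · exact hI.exists_relDiam h.diam

theorem preserves_forces (h : IsDirectedKAsim boxOne diamOne Θ N P l A A' B)
    (h' : IsDirectedKAsim boxOne diamOne Θ P N l A' A B') {I : MForm}
    (hΘ : (I.letters : Set ℕ) ⊆ Θ) :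
    Preserves l (I.depth boxOne diamOne) A (Forces boxOne diamOne N I)
      (Forces boxOne diamOne P I) := by
  induction I generalizing N P A A' B B' with
  | bot => exact fun _ _ _ _ _ _ _ => id
  | prop n =>
    exact fun as bs a b _ hA _ => h.base as bs a b hA n (hΘ (Finset.mem_singleton_self n))
  | conj I J ihI ihJ =>
    rw [MForm.letters, Finset.coe_union, Set.union_subset_iff] at hΘ
    exact ((ihI h h' hΘ.1).mono (le_max_left _ _)).and ((ihJ h h' hΘ.2).mono (le_max_right _ _))
  | disj I J ihI ihJ =>
    rw [MForm.letters, Finset.coe_union, Set.union_subset_iff] at hΘ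
    exact ((ihI h h' hΘ.1).mono (le_max_left _ _)).or ((ihJ h h' hΘ.2).mono (le_max_right _ _))
  | impl I J ihI ihJ =>
    rw [MForm.letters, Finset.coe_union, Set.union_subset_iff] at hΘ
    exact .forall_rel_imp h.step ((ihI h' h hΘ.1).mono (le_max_left _ _))
      ((ihJ h h' hΘ.2).mono (le_max_right _ _))
  | box I ih => exact h.preserves_box (ih h h' hΘ)
  | diam I ih => exact h.preserves_diam (ih h h' hΘ)

end IsDirectedKAsim

theorem statement_18_general {boxOne diamOne : Bool} {Θ : Set ℕ} {N P : Model} {l : ℕ}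
    {A B : List N.U → List P.U → Prop} {A' B' : List P.U → List N.U → Prop}
    (h : IsDirectedKAsim boxOne diamOne Θ N P l A A' B)
    (h' : IsDirectedKAsim boxOne diamOne Θ P N l A' A B') {I : MForm} {x : ℕ}
    (hΘ : ((ST boxOne diamOne I x).predLetters : Set ℕ) ⊆ Θ) :
    Preserves l (ST boxOne diamOne I x).degree A
      (fun a => SatAt N a x (ST boxOne diamOne I x))
      (fun b => SatAt P b x (ST boxOne diamOne I x)) := by
  rw [predLetters_ST] at hΘ
  simp only [satAt_ST_iff_forces, degree_ST]
  exact h.preserves_forces h' hΘ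

/-- **Key Lemma 1 (case (1,2)).**  If φ(x) = ST₁₂(I,x), k = r(φ), Σ_φ ⊆ Θ and
(A,B) is a (1,2)-modal ⟨(M₁,t),(M₂,u)⟩_l-asimulation, then for all sides p,q,
all (m+1)-tuples (ā_m,a) over M_p and (b̄_m,b) over M_q with (ā_m,a) A (b̄_m,b)
and m + k ≤ l: M_p,a ⊨ φ(x) implies M_q,b ⊨ φ(x). -/
theorem statement_18 (I : MForm) (x : ℕ) (φ : FOForm) (hφ : φ = ST true false I x)
    (k : ℕ) (hk : k = φ.degree)
    (Θ : Set ℕ) (hΘ : (φ.predLetters : Set ℕ) ⊆ Θ)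
    (M₁ M₂ : Model) (t : M₁.U) (u : M₂.U) (l : ℕ)
    (A12 : List M₁.U → List M₂.U → Prop) (A21 : List M₂.U → List M₁.U → Prop)
    (B12 : List M₁.U → List M₂.U → Prop) (B21 : List M₂.U → List M₁.U → Prop)
    (hasim : IsKAsimD2 true Θ M₁ M₂ t u l A12 A21 B12 B21) :
    (∀ (as : List M₁.U) (bs : List M₂.U) (a : M₁.U) (b : M₂.U),
      as.length = bs.length → A12 (as ++ [a]) (bs ++ [b]) → as.length + k ≤ l →
      SatAt M₁ a x φ → SatAt M₂ b x φ) ∧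
    (∀ (as : List M₂.U) (bs : List M₁.U) (a : M₂.U) (b : M₁.U),
      as.length = bs.length → A21 (as ++ [a]) (bs ++ [b]) → as.length + k ≤ l →
      SatAt M₂ a x φ → SatAt M₁ b x φ) := by
  subst hφ hk
  obtain ⟨h12, h21⟩ := hasim.isDirectedKAsim
  exact ⟨statement_18_general h12 h21 hΘ, statement_18_general h21 h12 hΘ⟩

end ModalIntAsim
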